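/- arXiv:1810.12493 — 3 statements merged into one kernel-verified Lean document; each statement's English description precedes it below -/
import Mathlib

section
/- There exist constants C > 0 and N₀ such that for all integers N ≥ N₀ and all integers ℓ with √N·(log N)² < |ℓ| ≤ N/2, the count V_d(ℓ, N + |ℓ|(|ℓ|+1)/2) satisfies |V_d(ℓ, N + |ℓ|(|ℓ|+1)/2) − p(N)| ≤ C·p(N)·N^{−√(log N)}; that is, V_d(ℓ, N + |ℓ|(|ℓ|+1)/2) = p(N)·(1 + O(N^{−√(log N)})) uniformly in this range of ℓ. -/
open scoped BigOperators

/-- `IsSCC n l k` says that the list `l = (a_1, ..., a_s)` of nonnegative integers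
is a strongly concave composition of `n` with central part at (1-indexed) position `k`:
`a_1 > a_2 > ... > a_{k-1} > a_k < a_{k+1} < ... < a_s` and `a_1 + ... + a_s = n`. -/
def IsSCC (n : ℕ) (l : List ℕ) (k : ℕ) : Prop :=
  1 ≤ k ∧ k ≤ l.length ∧ l.sum = n ∧
  (∀ i j : Fin l.length, (i : ℕ) < j → (j : ℕ) < k → l.get j < l.get i) ∧
  (∀ i j : Fin l.length, k - 1 ≤ (i : ℕ) → (i : ℕ) < j → l.get i < l.get j)

/-- The rank `s - 2k + 1` of a strongly concave composition with `s` parts and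
central part at position `k`. -/
def sccRank (l : List ℕ) (k : ℕ) : ℤ := (l.length : ℤ) - 2 * k + 1

/-- `Vd m n` is the number of strongly concave compositions of `n` with rank `m`. -/
noncomputable def Vd (m : ℤ) (n : ℕ) : ℕ :=
  Set.ncard {p : List ℕ × ℕ | IsSCC n p.1 p.2 ∧ sccRank p.1 p.2 = m}

/-- `VdTotal n` is the total number of strongly concave compositions of `n`. -/
noncomputable def VdTotal (n : ℕ) : ℕ :=
  Set.ncard {p : List ℕ × ℕ | IsSCC n p.1 p.2}

/-- The partition function, extended by `0` to negative integers. -/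
def partitionCount (k : ℤ) : ℕ :=
  if 0 ≤ k then Fintype.card (Nat.Partition k.toNat) else 0

open Real

/-! Order the elements `b₁ < b₂ < ⋯ < b_k` of a `k`-set of sum `N + ∑ i < k, i` and subtract the
staircase: the `b_i - (i - 1)` are the parts of a partition of `N`, so for `k ≥ N` there are `p(N)`
such sets. Cutting such a set at `m = k - l` (its Maya diagram) turns it into a pair of sets
`(A, B)` with `|B| = |A| + l` and weight `∑ a + ∑ (b + 1) = N + l(l + 1) / 2`; hence there are
`p(N)` of these pairs.

Strongly concave compositions of rank `l` with central part `0` are the pairs with `0 ∉ A` (shift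
`B` by one), and moving `0` out of `A` raises the charge `l` by one, so at most `p(N - l - 1)` pairs
are missed. For central part `c`, translation embeds the compositions into pairs of weight smaller
by `c(l + 1)`. Altogether `V_d(±l, N + l(l + 1) / 2)` differs from `p(N)` by at most
`N * p(N - l - 1)`.

A partition of `N` has at most `D = √(2 * N)` distinct parts, and this makes `p` at least double
over a step of length `2 * D` below `N`. For `l > √N (log N)²` the error is therefore smaller than
`p(N)` by a factor `exp (-(log N)² / 8)` up to a constant, which beats `N ^ (1 + √(log N))`. -/

section Staircase

open Finset

theorem sum_mapIdx_add (l : List ℕ) :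
    (l.mapIdx fun i a => a + i).sum = l.sum + ∑ i ∈ range l.length, i := by
  induction l using List.reverseRecOn with
  | nil => simp
  | append_singleton l a ih =>
    simp only [List.mapIdx_concat, List.sum_append, List.sum_singleton, ih, List.length_append,
      List.length_singleton, sum_range_succ]
    ring

theorem getElem_add_le_getElem_add_of_sortedLT {l : List ℕ} (hl : l.SortedLT) {i j : ℕ}
    (hij : i ≤ j) (hj : j < l.length) : l[i] + j ≤ l[j] + i := by
  induction j, hij using Nat.le_induction with
  | base => rfl
  | succ j hij ih =>
    have hstep : l[j] < l[j + 1] := hl.getElem_lt_getElem_of_lt j.lt_succ_self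
    have := ih (by omega)
    omega

theorem le_getElem_of_sortedLT {l : List ℕ} (hl : l.SortedLT) {i : ℕ} (hi : i < l.length) :
    i ≤ l[i] := by
  have := getElem_add_le_getElem_add_of_sortedLT hl i.zero_le hi
  omega

theorem sortedLE_mapIdx_sub {l : List ℕ} (hl : l.SortedLT) :
    (l.mapIdx fun i a => a - i).SortedLE := by
  refine List.sortedLE_of_getElem_le_getElem_of_le fun i j hi hj hij => ?_
  rw [List.length_mapIdx] at hj
  have := getElem_add_le_getElem_add_of_sortedLT hl hij hj
  simp only [List.getElem_mapIdx]
  omega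

theorem sortedLT_mapIdx_add {l : List ℕ} (hl : l.SortedLE) :
    (l.mapIdx fun i a => a + i).SortedLT := by
  refine List.sortedLT_of_getElem_lt_getElem_of_lt fun i j hi hj hij => ?_
  simp only [List.getElem_mapIdx]
  exact add_lt_add_of_le_of_lt (hl.getElem_le_getElem_of_le hij.le) hij

theorem mapIdx_sub_mapIdx_add (l : List ℕ) :
    (l.mapIdx fun i a => a + i).mapIdx (fun i a => a - i) = l :=
  List.ext_getElem (by simp) fun i _ _ => by simp

theorem mapIdx_add_mapIdx_sub {l : List ℕ} (hl : l.SortedLT) :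
    (l.mapIdx fun i a => a - i).mapIdx (fun i a => a + i) = l :=
  List.ext_getElem (by simp) fun i _ hi => by
    simp only [List.getElem_mapIdx, Nat.sub_add_cancel (le_getElem_of_sortedLT hl hi)]

theorem bijOn_mapIdx_sub (k n : ℕ) :
    Set.BijOn (List.mapIdx fun i a => a - i)
      {l : List ℕ | l.SortedLT ∧ l.length = k ∧ l.sum = n + ∑ i ∈ range k, i}
      {l : List ℕ | l.SortedLE ∧ l.length = k ∧ l.sum = n} := by
  refine Set.InvOn.bijOn (f' := List.mapIdx fun i a => a + i)
    ⟨fun l hl => mapIdx_add_mapIdx_sub hl.1, fun l _ => mapIdx_sub_mapIdx_add l⟩ ?_ ?_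
  · rintro l ⟨hl, rfl, hsum⟩
    refine ⟨sortedLE_mapIdx_sub hl, List.length_mapIdx, ?_⟩
    have := sum_mapIdx_add (l.mapIdx fun i a => a - i)
    rw [mapIdx_add_mapIdx_sub hl, hsum, List.length_mapIdx] at this
    omega
  · rintro l ⟨hl, rfl, rfl⟩
    exact ⟨sortedLT_mapIdx_add hl, List.length_mapIdx, sum_mapIdx_add l⟩

theorem sum_sort {M : Type*} [AddCommMonoid M] (s : Finset M) (r : M → M → Prop) [DecidableRel r]
    [IsTrans M r] [Std.Antisymm r] [Std.Total r] : (s.sort r).sum = ∑ x ∈ s, x := by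
  rw [← sum_toList, (sort_perm_toList s r).sum_eq]

theorem sum_toFinset_id {M : Type*} [AddCommMonoid M] [DecidableEq M] {l : List M}
    (hl : l.Nodup) : ∑ x ∈ l.toFinset, x = l.sum := by
  rw [List.sum_toFinset _ hl, List.map_id']

theorem bijOn_finset_sort (k n : ℕ) :
    Set.BijOn (fun s : Finset ℕ => s.sort) {s | #s = k ∧ ∑ x ∈ s, x = n}
      {l : List ℕ | l.SortedLT ∧ l.length = k ∧ l.sum = n} := by
  refine Set.InvOn.bijOn (f' := List.toFinset)
    ⟨fun s _ => sort_toFinset s _, fun l hl => ?_⟩ ?_ ?_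
  · exact (List.toFinset_sort _ hl.1.nodup).2 hl.1.sortedLE.pairwise
  · rintro s ⟨rfl, rfl⟩
    exact ⟨sortedLT_sort s, length_sort _, sum_sort s _⟩
  · rintro l ⟨hl, rfl, rfl⟩
    exact ⟨List.toFinset_card_of_nodup hl.nodup, sum_toFinset_id hl.nodup⟩

theorem bijOn_multiset_sort (k n : ℕ) :
    Set.BijOn (fun s : Multiset ℕ => s.sort) {s | s.card = k ∧ s.sum = n}
      {l : List ℕ | l.SortedLE ∧ l.length = k ∧ l.sum = n} := by
  refine Set.InvOn.bijOn (f' := fun l => (l : Multiset ℕ))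
    ⟨fun s _ => s.sort_eq _, fun l hl => ?_⟩ ?_ ?_
  · simp only [Multiset.coe_sort]
    exact List.mergeSort_eq_self _ hl.1.pairwise
  · rintro s ⟨rfl, rfl⟩
    refine ⟨(s.pairwise_sort _).sortedLE, Multiset.length_sort _, ?_⟩
    rw [← Multiset.sum_coe, s.sort_eq]
  · rintro l ⟨-, rfl, rfl⟩
    exact ⟨Multiset.coe_card l, Multiset.sum_coe l⟩

theorem card_parts_le {n : ℕ} (P : n.Partition) : P.parts.card ≤ n := by
  simpa [P.parts_sum] using
    Multiset.card_nsmul_le_sum (s := P.parts) (a := 1) fun _ hx => P.parts_pos hx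

theorem bijOn_parts_add_replicate_zero {k n : ℕ} (hnk : n ≤ k) :
    Set.BijOn (fun P : n.Partition => P.parts + Multiset.replicate (k - P.parts.card) 0)
      Set.univ {s | s.card = k ∧ s.sum = n} := by
  refine ⟨fun P _ => ?_, fun P _ Q _ h => ?_, fun s hs => ?_⟩
  · have := card_parts_le P
    exact ⟨by simp only [Multiset.card_add, Multiset.card_replicate]; omega, by simp [P.parts_sum]⟩
  · have filter_eq (P : n.Partition) (j : ℕ) :
        (P.parts + Multiset.replicate j 0).filter (0 < ·) = P.parts := by
      rw [Multiset.filter_add, Multiset.filter_eq_self.2 fun _ => P.parts_pos,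
        Multiset.filter_eq_nil.2 fun a ha => by simp [Multiset.eq_of_mem_replicate ha], add_zero]
    have := congrArg (Multiset.filter (0 < ·)) h
    simp only [filter_eq] at this
    exact Nat.Partition.ext this
  · obtain ⟨rfl, hsum⟩ := hs
    refine ⟨Nat.Partition.ofSums n s hsum, Set.mem_univ _, ?_⟩
    have hsplit := Multiset.filter_add_not (· ≠ 0) s
    have hcard := congrArg Multiset.card hsplit
    rw [Multiset.card_add] at hcard
    have hzero : s.filter (¬ · ≠ 0) =
        Multiset.replicate (s.card - (s.filter (· ≠ 0)).card) 0 :=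
      Multiset.eq_replicate.2 ⟨by omega, by simp⟩
    simpa only [Nat.Partition.ofSums, ← hzero] using hsplit

theorem partitionCount_natCast (n : ℕ) : partitionCount n = Fintype.card n.Partition := by
  simp [partitionCount]

theorem ncard_setOf_card_eq_and_sum_eq {k n : ℕ} (hnk : n ≤ k) :
    {s : Finset ℕ | #s = k ∧ ∑ x ∈ s, x = n + ∑ i ∈ range k, i}.ncard = partitionCount n := by
  rw [(bijOn_finset_sort _ _).ncard_eq, (bijOn_mapIdx_sub _ _).ncard_eq,
    ← (bijOn_multiset_sort _ _).ncard_eq, ← (bijOn_parts_add_replicate_zero hnk).ncard_eq,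
    Set.ncard_univ, Nat.card_eq_fintype_card, partitionCount_natCast]

theorem sum_range_card_le (s : Finset ℕ) : ∑ i ∈ range #s, i ≤ ∑ x ∈ s, x := by
  zify
  simpa using sum_range_le_sum (s := s.map Nat.castEmbedding) (c := 0) (by simp)

end Staircase

section Maya

open Finset

/-- The part of `s` in `[m, ∞)`, translated down to start at `0`. -/
noncomputable def shiftDown (m : ℕ) (s : Finset ℕ) : Finset ℕ :=
  s.preimage (· + m) (add_left_injective m).injOn

/-- The complement of `s` in `[0, m)`, read downwards from `m - 1`. In the Maya diagram of `s` with
origin `m`, these are the positions of the holes and `shiftDown m s` those of the particles. -/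
def holes (m : ℕ) (s : Finset ℕ) : Finset ℕ := {x ∈ range m | m - 1 - x ∉ s}

/-- The pairs `(A, B)` with `|B| = |A| + l` whose weight `∑ a + ∑ (b + 1)` equals `n`: Frobenius
symbols of charge `l`. The weight is an integer so that it can be translated freely; for negative
`n` there are no such pairs. -/
def chargedPairs (l : ℕ) (n : ℤ) : Set (Finset ℕ × Finset ℕ) :=
  {p | #p.2 = #p.1 + l ∧ ((∑ a ∈ p.1, a + ∑ b ∈ p.2, (b + 1) : ℕ) : ℤ) = n}

theorem mem_shiftDown {m x : ℕ} {s : Finset ℕ} : x ∈ shiftDown m s ↔ x + m ∈ s := by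
  simp [shiftDown]

theorem mem_holes {m x : ℕ} {s : Finset ℕ} : x ∈ holes m s ↔ x < m ∧ m - 1 - x ∉ s := by
  simp [holes]

theorem map_shiftDown (m : ℕ) (s : Finset ℕ) :
    (shiftDown m s).map (addRightEmbedding m) = {x ∈ s | m ≤ x} := by
  ext x
  simp only [mem_map, mem_shiftDown, addRightEmbedding_apply, mem_filter]
  exact ⟨by rintro ⟨y, hy, rfl⟩; exact ⟨hy, Nat.le_add_left m y⟩,
    fun ⟨hx, hm⟩ => ⟨x - m, by rwa [Nat.sub_add_cancel hm], Nat.sub_add_cancel hm⟩⟩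

theorem sum_holes {M : Type*} [AddCommMonoid M] (m : ℕ) (s : Finset ℕ) (f : ℕ → M) :
    ∑ x ∈ holes m s, f x = ∑ y ∈ range m with y ∉ s, f (m - 1 - y) := by
  refine sum_nbij' (m - 1 - ·) (m - 1 - ·) ?_ ?_ ?_ ?_ ?_ <;>
    simp only [mem_holes, mem_filter, mem_range]
  · exact fun x hx => ⟨by omega, hx.2⟩
  · exact fun y hy => ⟨by omega, by rw [show m - 1 - (m - 1 - y) = y by omega]; exact hy.2⟩
  · omega
  · omega
  · exact fun x hx => by rw [show m - 1 - (m - 1 - x) = x by omega]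

theorem sum_add_sum_range_notMem {M : Type*} [AddCommMonoid M] (m : ℕ) (s : Finset ℕ)
    (f : ℕ → M) :
    ∑ x ∈ s, f x + ∑ y ∈ range m with y ∉ s, f y =
      ∑ i ∈ range m, f i + ∑ b ∈ shiftDown m s, f (b + m) := by
  have hlow : {x ∈ s | ¬ m ≤ x} = {x ∈ range m | x ∈ s} := by
    ext x; simp [and_comm]
  have hhigh : ∑ x ∈ s with m ≤ x, f x = ∑ b ∈ shiftDown m s, f (b + m) := by
    rw [← map_shiftDown, sum_map]; rfl
  rw [← sum_filter_add_sum_filter_not s (m ≤ ·), hlow, hhigh,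
    ← sum_filter_add_sum_filter_not (range m) (· ∈ s)]
  ac_rfl

theorem card_add_card_holes (m : ℕ) (s : Finset ℕ) :
    #s + #(holes m s) = m + #(shiftDown m s) := by
  have hholes := sum_holes m s fun _ => 1
  have hsplit := sum_add_sum_range_notMem m s fun _ => 1
  simp only [sum_const, smul_eq_mul, mul_one, card_range] at hholes hsplit
  omega

theorem sum_add_mul_card_holes (m : ℕ) (s : Finset ℕ) :
    ∑ x ∈ s, x + m * #(holes m s) =
      ∑ i ∈ range m, i + ∑ a ∈ holes m s, (a + 1) + ∑ b ∈ shiftDown m s, (b + m) := by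
  have hreflect : ∑ y ∈ range m with y ∉ s, y + ∑ a ∈ holes m s, (a + 1) = m * #(holes m s) := by
    have hcard := sum_holes m s fun _ => m
    rw [sum_const, smul_eq_mul, mul_comm] at hcard
    rw [sum_holes, hcard, ← sum_add_distrib]
    refine sum_congr rfl fun y hy => ?_
    have := mem_range.1 (mem_filter.1 hy).1
    omega
  have := sum_add_sum_range_notMem m s id
  simp only [id] at this
  omega

theorem holes_union_map_shiftDown (m : ℕ) (s : Finset ℕ) :
    holes m (holes m s) ∪ (shiftDown m s).map (addRightEmbedding m) = s := by
  ext x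
  rw [map_shiftDown, mem_union, mem_holes, mem_holes, mem_filter]
  grind

theorem holes_holes_union_map {m : ℕ} {A : Finset ℕ} (hA : ∀ a ∈ A, a < m) (B : Finset ℕ) :
    holes m (holes m A ∪ B.map (addRightEmbedding m)) = A := by
  ext x
  simp only [mem_holes, mem_union, mem_map, addRightEmbedding_apply]
  grind

theorem shiftDown_holes_union_map (m : ℕ) (A B : Finset ℕ) :
    shiftDown m (holes m A ∪ B.map (addRightEmbedding m)) = B := by
  ext x
  simp [mem_shiftDown, mem_holes]

theorem le_sum_id {s : Finset ℕ} {a : ℕ} (ha : a ∈ s) : a ≤ ∑ x ∈ s, x :=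
  single_le_sum (f := fun x => x) (fun _ _ => Nat.zero_le _) ha

theorem mem_chargedPairs_maya_iff {m l N : ℕ} {s : Finset ℕ} :
    (holes m s, shiftDown m s) ∈ chargedPairs l (N + ∑ i ∈ range (l + 1), i : ℕ) ↔
      #s = m + l ∧ ∑ x ∈ s, x = N + ∑ i ∈ range (m + l), i := by
  have hcard := card_add_card_holes m s
  have hsum := sum_add_mul_card_holes m s
  simp only [sum_add_distrib, sum_const, smul_eq_mul, mul_one] at hsum
  have htri : ∑ i ∈ range (m + l), i = ∑ i ∈ range m, i + l * m + ∑ i ∈ range l, i := by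
    rw [sum_range_add, sum_add_distrib, sum_const, card_range, smul_eq_mul, add_assoc]
  simp only [chargedPairs, Set.mem_ofPred_eq, Nat.cast_inj, sum_range_succ, sum_add_distrib,
    sum_const, smul_eq_mul, mul_one, htri]
  have hcharge : #(shiftDown m s) = #(holes m s) + l ↔ #s = m + l := by omega
  rw [hcharge]
  refine and_congr_right fun hc => ?_
  rw [hcharge.2 hc] at hsum ⊢
  constructor <;> intro hs <;> linarith

theorem bijOn_maya {m l N : ℕ} (hm : N + ∑ i ∈ range (l + 1), i < m) :
    Set.BijOn (fun s => (holes m s, shiftDown m s))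
      {s | #s = m + l ∧ ∑ x ∈ s, x = N + ∑ i ∈ range (m + l), i}
      (chargedPairs l (N + ∑ i ∈ range (l + 1), i : ℕ)) := by
  have right_inv : Set.RightInvOn (fun p => holes m p.1 ∪ p.2.map (addRightEmbedding m))
      (fun s => (holes m s, shiftDown m s)) (chargedPairs l (N + ∑ i ∈ range (l + 1), i : ℕ)) := by
    rintro ⟨A, B⟩ ⟨-, hweight⟩
    have hA : ∀ a ∈ A, a < m := fun a ha => by
      have := le_sum_id ha
      dsimp only at hweight
      omega
    exact Prod.ext (holes_holes_union_map hA B) (shiftDown_holes_union_map m A B)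
  refine Set.InvOn.bijOn ⟨fun s _ => holes_union_map_shiftDown m s, right_inv⟩
    (fun s => mem_chargedPairs_maya_iff.2) fun p hp => ?_
  exact mem_chargedPairs_maya_iff.1 <| by rwa [← right_inv hp] at hp

theorem partitionCount_of_neg {k : ℤ} (hk : k < 0) : partitionCount k = 0 :=
  if_neg hk.not_ge

theorem chargedPairs_eq_empty {l : ℕ} {n : ℤ} (hn : n < ∑ i ∈ range (l + 1), i) :
    chargedPairs l n = ∅ := by
  refine Set.eq_empty_of_forall_notMem fun ⟨A, B⟩ ⟨hcard, hweight⟩ => ?_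
  have hB := sum_range_card_le B
  have hl : ∑ i ∈ range (l + 1), i ≤ ∑ i ∈ range (#B + 1), i :=
    sum_le_sum_of_subset (range_subset_range.2 (by dsimp only at hcard; omega))
  simp only [sum_range_succ, sum_add_distrib, sum_const, smul_eq_mul, mul_one] at hweight hl hn
  omega

theorem ncard_chargedPairs (l : ℕ) (n : ℤ) :
    (chargedPairs l n).ncard = partitionCount (n - ∑ i ∈ range (l + 1), i) := by
  rcases lt_or_ge n (∑ i ∈ range (l + 1), i : ℕ) with hn | hn
  · rw [chargedPairs_eq_empty (by exact_mod_cast hn), Set.ncard_empty,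
      partitionCount_of_neg (by push_cast at hn ⊢; linarith)]
  · obtain ⟨N, rfl⟩ : ∃ N : ℕ, n = (N + ∑ i ∈ range (l + 1), i : ℕ) :=
      ⟨(n - (∑ i ∈ range (l + 1), i : ℕ)).toNat, by omega⟩
    rw [← (bijOn_maya (Nat.lt_succ_self _)).ncard_eq,
      ncard_setOf_card_eq_and_sum_eq (by omega)]
    push_cast
    ring_nf

theorem finite_chargedPairs (l : ℕ) (n : ℤ) : (chargedPairs l n).Finite := by
  refine ((range (n.toNat + 1)).powerset ×ˢ (range (n.toNat + 1)).powerset).finite_toSet.subset ?_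
  rintro ⟨A, B⟩ ⟨-, hweight⟩
  simp only [sum_add_distrib] at hweight
  simp only [coe_product, Set.mem_prod, mem_coe, mem_powerset]
  constructor <;> intro x hx <;> have := le_sum_id hx <;> rw [mem_range] <;> omega

end Maya

section ConcaveTriples

open Finset

/-- Strongly concave compositions of `n` of rank `m`, encoded as triples `(c, A, B)` of the central
part, the set of parts to its left and the set of parts to its right. -/
def concaveTriples (m : ℤ) (n : ℕ) : Set (ℕ × Finset ℕ × Finset ℕ) :=
  {t | (∀ a ∈ t.2.1, t.1 < a) ∧ (∀ b ∈ t.2.2, t.1 < b) ∧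
    t.1 + ∑ a ∈ t.2.1, a + ∑ b ∈ t.2.2, b = n ∧ (#t.2.2 : ℤ) - #t.2.1 = m}

/-- The list of parts and the (1-indexed) central position of the composition encoded by
`(c, A, B)`. -/
def tripleToComposition (t : ℕ × Finset ℕ × Finset ℕ) : List ℕ × ℕ :=
  (t.2.1.sort (· ≥ ·) ++ t.1 :: t.2.2.sort (· ≤ ·), #t.2.1 + 1)

theorem isSCC_iff_pairwise {n k : ℕ} {l : List ℕ} :
    IsSCC n l k ↔ 1 ≤ k ∧ k ≤ l.length ∧ l.sum = n ∧
      (l.take k).Pairwise (· > ·) ∧ (l.drop (k - 1)).Pairwise (· < ·) := by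
  have htake : (l.take k).Pairwise (· > ·) ↔
      ∀ i j : Fin l.length, (i : ℕ) < j → (j : ℕ) < k → l.get j < l.get i := by
    simp only [List.pairwise_iff_getElem, List.length_take, List.getElem_take, lt_min_iff]
    exact ⟨fun h i j hij hj => h i j ⟨hij.trans hj, i.2⟩ ⟨hj, j.2⟩ hij,
      fun h i j hi hj hij => h ⟨i, hi.2⟩ ⟨j, hj.2⟩ hij hj.1⟩
  have hdrop : (l.drop (k - 1)).Pairwise (· < ·) ↔
      ∀ i j : Fin l.length, k - 1 ≤ (i : ℕ) → (i : ℕ) < j → l.get i < l.get j := by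
    simp only [List.pairwise_iff_getElem, List.length_drop, List.getElem_drop]
    refine ⟨fun h i j hi hij => ?_, fun h i j hi hj hij =>
      h ⟨k - 1 + i, by omega⟩ ⟨k - 1 + j, by omega⟩ (Nat.le_add_right ..) (by simpa using hij)⟩
    simpa [Nat.add_sub_cancel' hi, Nat.add_sub_cancel' (hi.trans hij.le)] using
      h (i - (k - 1)) (j - (k - 1)) (by omega) (by omega) (by omega)
  rw [htake, hdrop, IsSCC]

theorem isSCC_append_cons_iff {n c : ℕ} {L R : List ℕ} :
    IsSCC n (L ++ c :: R) (L.length + 1) ↔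
      L.sum + (c + R.sum) = n ∧ (L.Pairwise (· > ·) ∧ ∀ a ∈ L, c < a) ∧
        (∀ b ∈ R, c < b) ∧ R.Pairwise (· < ·) := by
  simp [isSCC_iff_pairwise, List.take_append, List.pairwise_append,
    List.take_of_length_le (Nat.le_succ L.length)]

theorem isSCC_tripleToComposition_iff {m : ℤ} {n : ℕ} {t : ℕ × Finset ℕ × Finset ℕ} :
    IsSCC n (tripleToComposition t).1 (tripleToComposition t).2 ∧
      sccRank (tripleToComposition t).1 (tripleToComposition t).2 = m ↔ t ∈ concaveTriples m n := by
  obtain ⟨c, A, B⟩ := t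
  have hrank : sccRank (tripleToComposition (c, A, B)).1 (tripleToComposition (c, A, B)).2 =
      (#B : ℤ) - #A := by
    simp only [sccRank, tripleToComposition, List.length_append, List.length_cons, length_sort]
    push_cast
    ring
  rw [hrank, tripleToComposition, ← length_sort (s := A) (· ≥ ·), isSCC_append_cons_iff]
  simp only [sum_sort, mem_sort, (sortedGT_sort A).pairwise, (sortedLT_sort B).pairwise,
    concaveTriples, Set.mem_ofPred_eq, true_and, and_true, length_sort]
  rw [← add_assoc, add_comm _ c]
  tauto

theorem tripleToComposition_injective : Function.Injective tripleToComposition := by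
  rintro ⟨c, A, B⟩ ⟨c', A', B'⟩ h
  obtain ⟨hlist, hcard⟩ := Prod.mk.inj h
  obtain ⟨hA, hcB⟩ := List.append_inj hlist (by simpa using hcard)
  obtain ⟨rfl, hB⟩ := List.cons.inj hcB
  have hA' : A = A' := by simpa only [sort_toFinset] using congrArg List.toFinset hA
  have hB' : B = B' := by simpa only [sort_toFinset] using congrArg List.toFinset hB
  rw [hA', hB']

theorem IsSCC.mem_range_tripleToComposition {n k : ℕ} {l : List ℕ} (h : IsSCC n l k) :
    (l, k) ∈ Set.range tripleToComposition := by
  obtain ⟨hk, hkl, -⟩ := id h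
  obtain ⟨L, c, R, rfl, rfl⟩ : ∃ L c R, l = L ++ c :: R ∧ k = L.length + 1 :=
    ⟨l.take (k - 1), l[k - 1], l.drop (k - 1 + 1), by
      rw [← List.drop_eq_getElem_cons, List.take_append_drop], by rw [List.length_take]; omega⟩
  obtain ⟨-, ⟨hL, -⟩, -, hR⟩ := isSCC_append_cons_iff.1 h
  refine ⟨(c, L.toFinset, R.toFinset), ?_⟩
  rw [tripleToComposition, (List.toFinset_sort (· ≥ ·) hL.sortedGT.nodup).2 (hL.imp le_of_lt),
    (List.toFinset_sort (· ≤ ·) hR.sortedLT.nodup).2 (hR.imp le_of_lt),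
    List.toFinset_card_of_nodup hL.sortedGT.nodup]

theorem Vd_eq_ncard_concaveTriples (m : ℤ) (n : ℕ) : Vd m n = (concaveTriples m n).ncard := by
  rw [Vd, ← Set.ncard_preimage_of_injective_subset_range tripleToComposition_injective
    fun p hp => hp.1.mem_range_tripleToComposition]
  exact congrArg Set.ncard (Set.ext fun t => isSCC_tripleToComposition_iff)

theorem ncard_concaveTriples_neg (m : ℤ) (n : ℕ) :
    (concaveTriples (-m) n).ncard = (concaveTriples m n).ncard := by
  refine Set.ncard_congr (fun t _ => (t.1, t.2.2, t.2.1)) ?_ (by grind) ?_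
  · rintro t ⟨hA, hB, hsum, hrank⟩
    exact ⟨hB, hA, by rw [add_right_comm, hsum], by rw [← neg_sub, hrank, neg_neg]⟩
  · rintro ⟨c, B, A⟩ ⟨hB, hA, hsum, hrank⟩
    exact ⟨(c, A, B), ⟨hA, hB, by rw [add_right_comm, hsum], by rw [← hrank, neg_sub]⟩, rfl⟩

theorem Vd_neg (m : ℤ) (n : ℕ) : Vd (-m) n = Vd m n := by
  simp only [Vd_eq_ncard_concaveTriples, ncard_concaveTriples_neg]

theorem Vd_natAbs (m : ℤ) (n : ℕ) : Vd m.natAbs n = Vd m n := by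
  obtain h | h := Int.natAbs_eq m
  · rw [← h]
  · rw [← Vd_neg, ← h]

theorem finite_concaveTriples (m : ℤ) (n : ℕ) : (concaveTriples m n).Finite := by
  refine (range (n + 1) ×ˢ (range (n + 1)).powerset ×ˢ (range (n + 1)).powerset).finite_toSet.subset
    ?_
  rintro ⟨c, A, B⟩ ⟨-, -, hsum, -⟩
  simp only [coe_product, Set.mem_prod, mem_coe, mem_powerset, mem_range]
  refine ⟨by dsimp only at hsum; omega, ?_, ?_⟩ <;> intro x hx <;>
    have := le_sum_id hx <;> rw [mem_range] <;> dsimp only at hsum <;> omega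

theorem ncard_chargedPairs_le_add (l n : ℕ) :
    (chargedPairs l n).ncard ≤
      (concaveTriples l n).ncard + (chargedPairs (l + 1) n).ncard := by
  rw [← Set.inter_union_sdiff (chargedPairs l n) {p | 0 ∉ p.1}]
  refine (Set.ncard_union_le _ _).trans (add_le_add ?_ ?_)
  · refine Set.ncard_le_ncard_of_injOn (fun p => (0, p.1, p.2.map (addRightEmbedding 1)))
      ?_ (fun p _ q _ h => by simpa [Prod.ext_iff] using h) (finite_concaveTriples _ _)
    rintro ⟨A, B⟩ ⟨⟨hcard, hweight⟩, hA⟩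
    refine ⟨fun a ha => Nat.pos_of_ne_zero (by rintro rfl; exact hA ha), by simp, ?_, ?_⟩
    · simpa using (by exact_mod_cast hweight : ∑ a ∈ A, a + ∑ b ∈ B, (b + 1) = n)
    · simp_all
  · refine Set.ncard_le_ncard_of_injOn (fun p => (p.1.erase 0, p.2)) ?_ ?_ (finite_chargedPairs _ _)
    · rintro ⟨A, B⟩ ⟨⟨hcard, hweight⟩, hA⟩
      have hA : 0 ∈ A := not_not.1 hA
      refine ⟨?_, by rwa [sum_erase A rfl]⟩
      dsimp only at hcard ⊢
      rw [hcard, ← card_erase_add_one hA]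
      ring
    · rintro ⟨A, B⟩ ⟨-, hA⟩ ⟨A', B'⟩ ⟨-, hA'⟩ h
      obtain ⟨hAA', hB⟩ := Prod.mk.inj h
      dsimp only at hAA' hB
      rw [hB, ← insert_erase (not_not.1 hA : 0 ∈ A), hAA', insert_erase (not_not.1 hA' : 0 ∈ A')]

theorem ncard_concaveTriples_inter_le (l n c : ℕ) :
    (concaveTriples l n ∩ {t | t.1 = c}).ncard ≤
      (chargedPairs l (n - c * (l + 1))).ncard := by
  have map_shiftDown_of_lt {B : Finset ℕ} (hB : ∀ b ∈ B, c < b) :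
      (shiftDown (c + 1) B).map (addRightEmbedding (c + 1)) = B := by
    rw [map_shiftDown, filter_true_of_mem fun b hb => Nat.succ_le_of_lt (hB b hb)]
  refine Set.ncard_le_ncard_of_injOn
    (fun t => (t.2.1.map (addRightEmbedding c), shiftDown (c + 1) t.2.2)) ?_ ?_
    (finite_chargedPairs _ _)
  · rintro ⟨c, A, B⟩ ⟨⟨-, hB, hsum, hrank⟩, rfl⟩
    dsimp only at hB hsum hrank map_shiftDown_of_lt
    rw [← map_shiftDown_of_lt hB, sum_map] at hsum
    rw [← map_shiftDown_of_lt hB, card_map] at hrank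
    have hcard : #(shiftDown (c + 1) B) = #A + l := by omega
    refine ⟨by simpa using hcard, ?_⟩
    simp only [sum_map, addRightEmbedding_apply, sum_add_distrib, sum_const, smul_eq_mul,
      hcard] at hsum ⊢
    rw [← hsum]
    push_cast
    ring
  · rintro ⟨_, A, B⟩ ⟨⟨-, hB, -⟩, rfl⟩ ⟨_, A', B'⟩ ⟨⟨-, hB', -⟩, rfl⟩ h
    obtain ⟨hA, hBB'⟩ := Prod.mk.inj h
    dsimp only at hA hBB' hB hB' map_shiftDown_of_lt ⊢
    rw [map_inj.1 hA, ← map_shiftDown_of_lt hB, hBB', map_shiftDown_of_lt hB']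

end ConcaveTriples

section PartitionGrowth

open Finset

theorem partitionCount_monotone : Monotone partitionCount := by
  refine monotone_int_of_le_succ fun k => ?_
  obtain hk | ⟨n, rfl⟩ := (lt_or_ge k 0).imp_right Int.eq_ofNat_of_zero_le
  · rw [partitionCount_of_neg hk]
    exact Nat.zero_le _
  · rw [partitionCount_natCast, ← Nat.cast_succ, partitionCount_natCast]
    refine Fintype.card_le_of_injective (fun P => ⟨1 ::ₘ P.parts, ?_, ?_⟩) fun P Q h => ?_
    · simpa using fun _ => P.parts_pos
    · simp [P.parts_sum, add_comm]
    · exact Nat.Partition.ext ((Multiset.cons_inj_right 1).1 (congrArg Nat.Partition.parts h))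

theorem card_toFinset_parts_le_sqrt {n : ℕ} (P : n.Partition) :
    #P.parts.toFinset ≤ Nat.sqrt (2 * n) := by
  have hzero : 0 ∉ P.parts.toFinset := by simpa using fun h => (P.parts_pos h).ne rfl
  have hsum : ∑ x ∈ P.parts.toFinset, x ≤ n := by
    refine le_of_le_of_eq ?_ P.parts_sum
    rw [sum_multiset_count]
    refine sum_le_sum fun x hx => ?_
    exact Nat.le_mul_of_pos_left x (Multiset.count_pos.2 (Multiset.mem_toFinset.1 hx))
  have htri := sum_range_card_le (insert 0 P.parts.toFinset)
  rw [card_insert_of_notMem hzero, sum_insert hzero] at htri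
  have := sum_range_id_mul_two (#P.parts.toFinset + 1)
  rw [Nat.le_sqrt]
  simp only [Nat.add_sub_cancel] at this
  nlinarith

/-- Filling up a partition of `n` by a marked part `k ≤ m` and `m - k` ones gives a partition of
`n + m` with one of its distinct parts marked. -/
theorem mul_card_partition_le (m n : ℕ) :
    m * Fintype.card n.Partition ≤
      Nat.sqrt (2 * (n + m)) * Fintype.card (n + m).Partition := by
  let mark (x : Fin m × n.Partition) : (Q : (n + m).Partition) × Q.parts.toFinset :=
    ⟨⟨(x.1 + 1) ::ₘ (x.2.parts + Multiset.replicate (m - (x.1 + 1)) 1),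
      by simpa [or_imp, forall_and, Multiset.mem_replicate] using fun _ => x.2.parts_pos,
      by simp [x.2.parts_sum]; omega⟩, x.1 + 1, by simp⟩
  have mark_injective : Function.Injective mark := by
    rintro ⟨k, P⟩ ⟨k', P'⟩ h
    have hk : (k : ℕ) + 1 = k' + 1 := congrArg (fun y => (y.2 : ℕ)) h
    obtain rfl : k = k' := Fin.ext (Nat.succ_injective hk)
    have hparts := congrArg (fun y => y.1.parts) h
    simpa [mark, ← Nat.Partition.ext_iff] using hparts
  calc m * Fintype.card n.Partition = Fintype.card (Fin m × n.Partition) := by simp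
    _ ≤ ∑ Q : (n + m).Partition, #Q.parts.toFinset := by
      simpa only [Fintype.card_sigma, Fintype.card_coe] using
        Fintype.card_le_of_injective mark mark_injective
    _ ≤ ∑ _Q : (n + m).Partition, Nat.sqrt (2 * (n + m)) :=
      sum_le_sum fun Q _ => card_toFinset_parts_le_sqrt Q
    _ = Nat.sqrt (2 * (n + m)) * Fintype.card (n + m).Partition := by simp [mul_comm]

theorem two_mul_partitionCount_sub_le {N : ℕ} (hN : 0 < N) {k : ℤ} (hk : k ≤ N) :
    2 * partitionCount (k - 2 * Nat.sqrt (2 * N)) ≤ partitionCount k := by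
  set D := Nat.sqrt (2 * N)
  have hD : 0 < D := Nat.sqrt_pos.2 (by omega)
  obtain hneg | ⟨n, hn⟩ := (lt_or_ge (k - 2 * D) 0).imp_right Int.eq_ofNat_of_zero_le
  · rw [partitionCount_of_neg hneg]
    exact Nat.zero_le _
  obtain rfl : k = (n + 2 * D : ℕ) := by push_cast; linarith
  rw [hn, partitionCount_natCast, partitionCount_natCast]
  refine Nat.le_of_mul_le_mul_left ?_ hD
  calc D * (2 * Fintype.card n.Partition) = 2 * D * Fintype.card n.Partition := by ring
    _ ≤ Nat.sqrt (2 * (n + 2 * D)) * Fintype.card (n + 2 * D).Partition :=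
      mul_card_partition_le _ _
    _ ≤ D * Fintype.card (n + 2 * D).Partition :=
      Nat.mul_le_mul_right _ (Nat.sqrt_le_sqrt (by omega))

theorem two_pow_mul_partitionCount_sub_le {N : ℕ} (hN : 0 < N) (t : ℕ) :
    2 ^ t * partitionCount (N - 2 * Nat.sqrt (2 * N) * t) ≤ partitionCount N := by
  induction t with
  | zero => simp
  | succ t ih =>
    refine le_trans ?_ ih
    rw [pow_succ, mul_assoc]
    refine Nat.mul_le_mul_left _ (le_of_eq_of_le ?_
      (two_mul_partitionCount_sub_le hN (sub_le_self _ (by positivity))))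
    push_cast
    ring_nf

theorem partitionCount_sub_le {N : ℕ} (hN : 0 < N) (j : ℕ) :
    (partitionCount (N - j) : ℝ) ≤ 2 * exp (-(j / (8 * √N))) * partitionCount N := by
  set D := Nat.sqrt (2 * N)
  have hD : 0 < D := Nat.sqrt_pos.2 (by omega)
  set t := j / (2 * D)
  have hsqrt : 0 < √(N : ℝ) := Real.sqrt_pos.2 (by exact_mod_cast hN)
  have hD_le : (D : ℝ) ≤ 2 * √N := by
    have : (D : ℝ) * D ≤ 2 * N := by exact_mod_cast Nat.sqrt_le (2 * N)
    nlinarith [Real.mul_self_sqrt (Nat.cast_nonneg (α := ℝ) N)]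
  have hj_lt : (j : ℝ) < 2 * D * (t + 1) := by
    exact_mod_cast Nat.lt_mul_div_succ j (by omega : 0 < 2 * D)
  have hexp : exp (j / (8 * √N)) ≤ 2 * 2 ^ t := by
    rw [← pow_succ', ← Real.exp_log two_pos, ← Real.exp_nat_mul, Real.exp_le_exp,
      div_le_iff₀ (by positivity)]
    have := Real.log_two_gt_d9
    push_cast
    nlinarith [mul_le_mul_of_nonneg_right hD_le (by positivity : (0 : ℝ) ≤ t + 1),
      mul_pos hsqrt (by positivity : (0 : ℝ) < t + 1)]
  have hpow : (2 ^ t * partitionCount (N - j) : ℝ) ≤ partitionCount N := by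
    have hmono : partitionCount (N - j) ≤ partitionCount (N - 2 * D * t) :=
      partitionCount_monotone (sub_le_sub_left (by exact_mod_cast Nat.mul_div_le j (2 * D)) _)
    exact_mod_cast (Nat.mul_le_mul_left _ hmono).trans (two_pow_mul_partitionCount_sub_le hN t)
  rw [Real.exp_neg, mul_right_comm, ← div_eq_mul_inv, le_div_iff₀ (Real.exp_pos _)]
  calc (partitionCount (N - j) : ℝ) * exp (j / (8 * √N))
      ≤ partitionCount (N - j) * (2 * 2 ^ t) := by gcongr
    _ = 2 * (2 ^ t * partitionCount (N - j)) := by ring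
    _ ≤ 2 * partitionCount N := by gcongr

theorem mul_exp_neg_log_sq_le_rpow {x : ℝ} (hx : exp 100 ≤ x) :
    x * exp (-(log x ^ 2 / 8)) ≤ x ^ (-√(log x)) := by
  have hx_pos : 0 < x := (Real.exp_pos _).trans_le hx
  have hlog : 100 ≤ log x := (Real.le_log_iff_exp_le hx_pos).2 hx
  have hsqrt : 10 ≤ √(log x) := Real.le_sqrt_of_sq_le (by linarith)
  have hsq : √(log x) ^ 2 = log x := Real.sq_sqrt (by linarith)
  have hlin : 1 + √(log x) ≤ log x / 8 := by nlinarith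
  rw [Real.rpow_def_of_pos hx_pos]
  nth_rewrite 1 [← Real.exp_log hx_pos]
  rw [← Real.exp_add, Real.exp_le_exp]
  nlinarith

end PartitionGrowth

section Estimate

open Finset

theorem partitionCount_le_ncard_concaveTriples_add (l N : ℕ) :
    partitionCount N ≤ (concaveTriples l (N + ∑ i ∈ range (l + 1), i)).ncard +
      partitionCount (N - (l + 1 : ℕ)) := by
  convert ncard_chargedPairs_le_add l (N + ∑ i ∈ range (l + 1), i) using 2 <;>
    rw [ncard_chargedPairs] <;> congr 1 <;> push_cast [sum_range_succ] <;> ring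

theorem ncard_concaveTriples_inter_le_partitionCount (l N c : ℕ) :
    (concaveTriples l (N + ∑ i ∈ range (l + 1), i) ∩ {t | t.1 = c}).ncard ≤
      partitionCount (N - c * (l + 1 : ℕ)) := by
  refine (ncard_concaveTriples_inter_le _ _ _).trans_eq ?_
  rw [ncard_chargedPairs]
  congr 1
  push_cast
  ring

theorem fst_le_of_mem_concaveTriples {l N : ℕ} {t : ℕ × Finset ℕ × Finset ℕ}
    (ht : t ∈ concaveTriples l (N + ∑ i ∈ range (l + 1), i)) : t.1 ≤ N := by
  by_contra! hN
  have hpos : 0 < (concaveTriples l (N + ∑ i ∈ range (l + 1), i) ∩ {u | u.1 = t.1}).ncard :=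
    (Set.ncard_pos ((finite_concaveTriples _ _).inter_of_left _)).2 ⟨t, ht, rfl⟩
  have hle := ncard_concaveTriples_inter_le_partitionCount l N t.1
  rw [partitionCount_of_neg] at hle
  · omega
  · push_cast
    nlinarith

theorem ncard_concaveTriples_le (l N : ℕ) :
    (concaveTriples l (N + ∑ i ∈ range (l + 1), i)).ncard ≤
      partitionCount N + N * partitionCount (N - (l + 1 : ℕ)) := by
  set T := concaveTriples l (N + ∑ i ∈ range (l + 1), i)
  have hcover : T = ⋃ c ∈ range (N + 1), (T ∩ {t | t.1 = c}) := by
    ext t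
    simpa using fun ht => Nat.lt_succ_of_le (fst_le_of_mem_concaveTriples ht)
  calc T.ncard ≤ ∑ c ∈ range (N + 1), (T ∩ {t | t.1 = c}).ncard := by
        conv_lhs => rw [hcover]
        exact Finset.set_ncard_biUnion_le _ _
    _ ≤ ∑ c ∈ range (N + 1), partitionCount (N - c * (l + 1 : ℕ)) :=
        sum_le_sum fun c _ => ncard_concaveTriples_inter_le_partitionCount l N c
    _ = partitionCount N + ∑ c ∈ range N, partitionCount (N - (c + 1 : ℕ) * (l + 1 : ℕ)) := by
        rw [sum_range_succ', add_comm]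
        simp
    _ ≤ partitionCount N + ∑ _c ∈ range N, partitionCount (N - (l + 1 : ℕ)) := by
        gcongr with c
        refine partitionCount_monotone (sub_le_sub_left ?_ _)
        exact_mod_cast Nat.le_mul_of_pos_left _ c.succ_pos
    _ = partitionCount N + N * partitionCount (N - (l + 1 : ℕ)) := by simp

theorem abs_Vd_sub_partitionCount_le (ℓ : ℤ) (N : ℕ) :
    |(Vd ℓ (N + ℓ.natAbs * (ℓ.natAbs + 1) / 2) : ℝ) - partitionCount N| ≤
      N * partitionCount (N - (ℓ.natAbs + 1 : ℕ)) := by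
  rw [← Vd_natAbs, Vd_eq_ncard_concaveTriples]
  generalize ℓ.natAbs = l
  rw [show l * (l + 1) / 2 = ∑ i ∈ range (l + 1), i by
    rw [sum_range_id, Nat.add_sub_cancel, mul_comm]]
  have hupper : ((concaveTriples l (N + ∑ i ∈ range (l + 1), i)).ncard : ℝ) ≤
      partitionCount N + N * partitionCount (N - (l + 1 : ℕ)) := by
    exact_mod_cast ncard_concaveTriples_le l N
  have hlower : (partitionCount N : ℝ) ≤
      (concaveTriples l (N + ∑ i ∈ range (l + 1), i)).ncard +
        partitionCount (N - (l + 1 : ℕ)) := by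
    exact_mod_cast partitionCount_le_ncard_concaveTriples_add l N
  have herror : (partitionCount (N - (l + 1 : ℕ)) : ℝ) ≤
      N * partitionCount (N - (l + 1 : ℕ)) := by
    rcases N.eq_zero_or_pos with rfl | hN
    · rw [partitionCount_of_neg (by omega)]
      simp
    · exact le_mul_of_one_le_left (Nat.cast_nonneg _) (by exact_mod_cast hN)
  rw [abs_le]
  constructor <;> linarith

end Estimate

theorem stmt_9_general :
    ∃ C > (0 : ℝ), ∃ N₀ : ℕ, ∀ N : ℕ, N₀ ≤ N → ∀ ℓ : ℤ,
      Real.sqrt N * (Real.log N) ^ 2 < |(ℓ : ℝ)| →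
      |(Vd ℓ (N + ℓ.natAbs * (ℓ.natAbs + 1) / 2) : ℝ) - (partitionCount (N : ℤ) : ℝ)| ≤
        C * (partitionCount (N : ℤ) : ℝ) * (N : ℝ) ^ (-Real.sqrt (Real.log N)) := by
  refine ⟨2, two_pos, ⌈exp 100⌉₊, fun N hN ℓ hℓ => ?_⟩
  have hN_exp : exp 100 ≤ N := Nat.ceil_le.1 hN
  have hN_pos : 0 < (N : ℝ) := (Real.exp_pos _).trans_le hN_exp
  have hdecay : log N ^ 2 / 8 ≤ (ℓ.natAbs + 1 : ℕ) / (8 * √N) := by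
    rw [div_le_div_iff₀ (by norm_num) (by positivity)]
    rw [← Int.cast_abs, Int.abs_eq_natAbs, Int.cast_natCast] at hℓ
    push_cast
    linarith
  calc |(Vd ℓ (N + ℓ.natAbs * (ℓ.natAbs + 1) / 2) : ℝ) - partitionCount N|
      ≤ N * partitionCount (N - (ℓ.natAbs + 1 : ℕ)) := abs_Vd_sub_partitionCount_le ℓ N
    _ ≤ N * (2 * exp (-((ℓ.natAbs + 1 : ℕ) / (8 * √N))) * partitionCount N) := by
      gcongr
      exact partitionCount_sub_le (by exact_mod_cast hN_pos) _
    _ ≤ N * (2 * exp (-(log N ^ 2 / 8)) * partitionCount N) := by gcongr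
    _ = 2 * partitionCount N * (N * exp (-(log N ^ 2 / 8))) := by ring
    _ ≤ 2 * partitionCount N * (N : ℝ) ^ (-√(log N)) := by
      gcongr
      exact mul_exp_neg_log_sq_le_rpow hN_exp

theorem stmt_9 :
    ∃ C > (0 : ℝ), ∃ N₀ : ℕ, ∀ N : ℕ, N₀ ≤ N → ∀ ℓ : ℤ,
      Real.sqrt N * (Real.log N) ^ 2 < |(ℓ : ℝ)| → |(ℓ : ℝ)| ≤ (N : ℝ) / 2 →
      |(Vd ℓ (N + ℓ.natAbs * (ℓ.natAbs + 1) / 2) : ℝ) - (partitionCount (N : ℤ) : ℝ)| ≤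
        C * (partitionCount (N : ℤ) : ℝ) * (N : ℝ) ^ (-Real.sqrt (Real.log N)) := by
  obtain ⟨C, hC, N₀, hbound⟩ := stmt_9_general
  exact ⟨C, hC, N₀, fun N hN ℓ hℓ _ => hbound N hN ℓ hℓ⟩
end

section
/- Let B = 2π/√6, and for integers n ≥ 0 and ℓ ≥ 0 let Q₁(n, ℓ) = 2n(3n + 1) + 3nℓ and Q₂(n, ℓ) = Q₁(n, ℓ) + 8n + 4 + 2ℓ. There exist constants C > 0 and N₀ such that for all integers N ≥ N₀ and all integers ℓ with 0 ≤ ℓ ≤ N^{3/8}, the sum I_M = Σ_{n≥0} (e^{−B·Q₁(n,ℓ)/(2√N)} − e^{−B·Q₂(n,ℓ)/(2√N)}) satisfies |I_M − 2/3| ≤ C·N^{−1/10}. -/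
open Real

/-- `Q₁(n, ℓ) = 2n(3n + 1) + 3nℓ`. -/
def Q1 (n ℓ : ℕ) : ℕ := 2 * n * (3 * n + 1) + 3 * n * ℓ

/-- `Q₂(n, ℓ) = Q₁(n, ℓ) + 8n + 4 + 2ℓ`. -/
def Q2 (n ℓ : ℕ) : ℕ := Q1 n ℓ + 8 * n + 4 + 2 * ℓ

/-!
`Q₂(n, ℓ)` is the polynomial `Q₁(·, ℓ)` evaluated at `n + 2/3`. So with
`f x = exp (-(α x² + β x))` for suitable `α, β → 0`, the sum is `∑ (f n - f (n + θ))` at `θ = 2/3`.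
Comparing each term with `θ (f n - f (n + 1))`, whose sum telescopes to `θ`, the mean value theorem
bounds the total error by `θ (1 - θ)` times the variation of `f'` on `[0, ∞)`. Since `f'` first
decreases and then increases, that variation is at most twice `sup |f'| ≤ √(2α) + β`.
-/

open Filter Set Topology

section ShiftedDifferences

variable {f f' : ℝ → ℝ}

lemma exists_divided_difference_eq {a b c : ℝ} (hac : a < c) (hcb : c < b)
    (hf : ContinuousOn f (Icc a b)) (hf' : ∀ x ∈ Ioo a b, HasDerivAt f (f' x) x) :
    ∃ x ∈ Ioo a c, ∃ y ∈ Ioo c b,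
      (b - a) * (f a - f c) - (c - a) * (f a - f b) = (c - a) * (b - c) * (f' y - f' x) := by
  obtain ⟨x, hx, hfx⟩ := exists_hasDerivAt_eq_slope f f' hac
    (hf.mono (Icc_subset_Icc_right hcb.le)) fun x hx ↦ hf' x ⟨hx.1, hx.2.trans hcb⟩
  obtain ⟨y, hy, hfy⟩ := exists_hasDerivAt_eq_slope f f' hcb
    (hf.mono (Icc_subset_Icc_left hac.le)) fun y hy ↦ hf' y ⟨hac.trans hy.1, hy.2⟩
  refine ⟨x, hx, y, hy, ?_⟩
  rw [eq_div_iff (sub_pos.2 hac).ne'] at hfx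
  rw [eq_div_iff (sub_pos.2 hcb).ne'] at hfy
  linear_combination (b - c) * hfx - (c - a) * hfy

lemma hasSum_sub_succ_of_antitone {u : ℕ → ℝ} {L : ℝ} (hu : Antitone u)
    (hL : Tendsto u atTop (𝓝 L)) : HasSum (fun n ↦ u n - u (n + 1)) (u 0 - L) := by
  rw [hasSum_iff_tendsto_nat_of_nonneg fun n ↦ sub_nonneg.2 (hu n.le_succ)]
  simpa only [Finset.sum_range_sub'] using hL.const_sub (u 0)

/-- The increment over `[n, n + 1]` of the total variation of `g` on `[0, ∞)`. -/
noncomputable def unitVariation (g : ℝ → ℝ) (n : ℕ) : ℝ :=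
  variationOnFromTo g (Ici 0) 0 (n + 1 : ℕ) - variationOnFromTo g (Ici 0) 0 n

lemma abs_sub_le_unitVariation {g : ℝ → ℝ} (hg : LocallyBoundedVariationOn g (Ici 0)) {n : ℕ}
    {x y : ℝ} (hnx : n ≤ x) (hxy : x ≤ y) (hyn : y ≤ n + 1) :
    |g y - g x| ≤ unitVariation g n := by
  have h0 : (0 : ℝ) ∈ Ici (0 : ℝ) := self_mem_Ici
  have hn : (n : ℝ) ∈ Ici (0 : ℝ) := mem_Ici.2 n.cast_nonneg
  have hx : x ∈ Ici (0 : ℝ) := hn.trans hnx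
  have hy : y ∈ Ici (0 : ℝ) := hx.trans hxy
  have hmono := variationOnFromTo.monotoneOn hg h0
  have hleft := hmono hn hx hnx
  have hright := hmono hy (mem_Ici.2 (n + 1).cast_nonneg) (hyn.trans_eq n.cast_succ.symm)
  have hmid := variationOnFromTo.abs_sub_le_sub_of_le hg h0 hx hy hxy
  rw [unitVariation]
  linarith

lemma sum_unitVariation_le {g : ℝ → ℝ} (hg : BoundedVariationOn g (Ici 0)) (n : ℕ) :
    ∑ i ∈ Finset.range n, unitVariation g i ≤ (eVariationOn g (Ici 0)).toReal := by
  simp only [unitVariation]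
  rw [Finset.sum_range_sub (fun i : ℕ ↦ variationOnFromTo g (Ici 0) 0 i), Nat.cast_zero,
    variationOnFromTo.self, sub_zero]
  exact (le_abs_self _).trans (variationOnFromTo.abs_le_eVariationOn hg)

lemma unitVariation_nonneg {g : ℝ → ℝ} (hg : LocallyBoundedVariationOn g (Ici 0)) (n : ℕ) :
    0 ≤ unitVariation g n :=
  (abs_nonneg _).trans (abs_sub_le_unitVariation hg le_rfl le_rfl (by linarith))

lemma abs_sub_shift_sub_mul_le_unitVariation {θ : ℝ} (hθ : θ ∈ Ioo (0 : ℝ) 1)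
    (hf : ∀ x ∈ Ici (0 : ℝ), HasDerivWithinAt f (f' x) (Ici 0) x)
    (hvar : LocallyBoundedVariationOn f' (Ici 0)) (n : ℕ) :
    |(f n - f (n + θ)) - θ * (f n - f (n + 1))| ≤ θ * (1 - θ) * unitVariation f' n := by
  have hn : (0 : ℝ) ≤ n := n.cast_nonneg
  have hθ' : 0 ≤ θ * (1 - θ) := mul_nonneg hθ.1.le (sub_nonneg.2 hθ.2.le)
  obtain ⟨x, hx, y, hy, hxy⟩ := exists_divided_difference_eq (a := n) (c := n + θ) (b := n + 1)
    (by linarith [hθ.1]) (by linarith [hθ.2])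
    (fun x hx ↦ (hf x (hn.trans hx.1)).continuousWithinAt.mono
      (Icc_subset_Ici_self.trans (Ici_subset_Ici.2 hn)))
    (fun x hx ↦ (hf x (hn.trans hx.1.le)).hasDerivAt (Ici_mem_nhds (hn.trans_lt hx.1)))
  have hdiff : (f n - f (n + θ)) - θ * (f n - f (n + 1)) = θ * (1 - θ) * (f' y - f' x) := by
    linear_combination hxy
  rw [hdiff, abs_mul, abs_of_nonneg hθ']
  gcongr
  exact abs_sub_le_unitVariation hvar hx.1.le (hx.2.trans hy.1).le hy.2.le

lemma abs_tsum_sub_shift_sub_le {L θ : ℝ} (hθ : θ ∈ Ioo (0 : ℝ) 1)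
    (hf : ∀ x ∈ Ici (0 : ℝ), HasDerivWithinAt f (f' x) (Ici 0) x)
    (hvar : BoundedVariationOn f' (Ici 0)) (hanti : AntitoneOn f (Ici 0))
    (hL : Tendsto f atTop (𝓝 L)) :
    |∑' n : ℕ, (f n - f (n + θ)) - θ * (f 0 - L)| ≤
      θ * (1 - θ) * (eVariationOn f' (Ici 0)).toReal := by
  have hθ' : 0 ≤ θ * (1 - θ) := mul_nonneg hθ.1.le (sub_nonneg.2 hθ.2.le)
  have hlocal := hvar.locallyBoundedVariationOn
  have htel : HasSum (fun n : ℕ ↦ θ * (f n - f (n + 1))) (θ * (f 0 - L)) := by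
    have := hasSum_sub_succ_of_antitone (u := fun n : ℕ ↦ f n)
      (fun m n hmn ↦ hanti (mem_Ici.2 m.cast_nonneg) (mem_Ici.2 n.cast_nonneg) (Nat.cast_le.2 hmn))
      (hL.comp tendsto_natCast_atTop_atTop)
    simpa only [Nat.cast_succ, Nat.cast_zero] using this.mul_left θ
  have hterm (n : ℕ) : ‖(f n - f (n + θ)) - θ * (f n - f (n + 1))‖ ≤
      θ * (1 - θ) * unitVariation f' n :=
    abs_sub_shift_sub_mul_le_unitVariation hθ hf hlocal n
  have hbound := (summable_of_sum_range_le (unitVariation_nonneg hlocal)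
    (sum_unitVariation_le hvar)).hasSum.mul_left (θ * (1 - θ))
  have herr := (Summable.of_norm_bounded hbound.summable hterm).hasSum
  have hsum := herr.add htel
  simp only [sub_add_cancel] at hsum
  rw [hsum.tsum_eq, add_sub_cancel_right]
  calc _ ≤ θ * (1 - θ) * ∑' n, unitVariation f' n := herr.norm_le_of_bounded hbound hterm
    _ ≤ _ := by
      gcongr
      exact Real.tsum_le_of_sum_range_le (unitVariation_nonneg hlocal) (sum_unitVariation_le hvar)

end ShiftedDifferences

lemma eVariationOn_Ici_le_of_antitoneOn_of_monotoneOn {ι : Type*} [LinearOrder ι] {g : ι → ℝ}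
    {m M : ℝ} {a c : ι} (hac : a ≤ c) (hanti : AntitoneOn g (Icc a c))
    (hmono : MonotoneOn g (Ici c)) (hg : MapsTo g (Ici a) (Icc m M)) :
    eVariationOn g (Ici a) ≤ 2 * ENNReal.ofReal (M - m) := by
  rw [← Icc_union_Ici_eq_Ici hac, eVariationOn.union g (isGreatest_Icc hac) isLeast_Ici, two_mul]
  exact add_le_add
    ((eVariationOn.comp_le_of_antitoneOn id g hanti (hg.mono_left Icc_subset_Ici_self)).trans_eq
      (eVariationOn_id_Icc m M))
    ((eVariationOn.comp_le_of_monotoneOn id g hmono (hg.mono_left (Ici_subset_Ici.2 hac))).trans_eq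
      (eVariationOn_id_Icc m M))

/-- The Gaussian profile `exp (-(α x² + β x))`; the exponentials of the theorem are its values at
`n` and `n + 2/3`. -/
noncomputable def quadExp (α β x : ℝ) : ℝ := exp (-(α * x ^ 2 + β * x))

section quadExp

variable {α β : ℝ}

lemma hasDerivAt_quadExp (α β x : ℝ) :
    HasDerivAt (quadExp α β) (-((2 * α * x + β) * quadExp α β x)) x := by
  have hpoly : HasDerivAt (fun x ↦ -(α * x ^ 2 + β * x)) (-(2 * α * x + β)) x := by
    convert! (((hasDerivAt_id' x).pow 2 |>.const_mul α).add
      ((hasDerivAt_id' x).const_mul β)).neg using 1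
    norm_num
    ring
  convert! hpoly.exp using 1
  rw [quadExp]
  ring

lemma deriv_quadExp (α β : ℝ) :
    deriv (quadExp α β) = fun x ↦ -((2 * α * x + β) * quadExp α β x) :=
  funext fun x ↦ (hasDerivAt_quadExp α β x).deriv

lemma hasDerivAt_deriv_quadExp (α β x : ℝ) :
    HasDerivAt (deriv (quadExp α β)) (((2 * α * x + β) ^ 2 - 2 * α) * quadExp α β x) x := by
  have hlin : HasDerivAt (fun x ↦ 2 * α * x + β) (2 * α) x := by
    simpa using ((hasDerivAt_id' x).const_mul (2 * α)).add_const β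
  rw [deriv_quadExp]
  convert! (hlin.mul (hasDerivAt_quadExp α β x)).neg using 1
  ring

lemma deriv_quadExp_mem_Icc (hα : 0 ≤ α) (hβ : 0 ≤ β) {x : ℝ} (hx : 0 ≤ x) :
    deriv (quadExp α β) x ∈ Icc (-(√(2 * α) + β)) 0 := by
  have hsq : √(2 * α) ^ 2 = 2 * α := sq_sqrt (by positivity)
  have hlin : 2 * α * x + β ≤ (√(2 * α) + β) * exp (α * x ^ 2 + β * x) := calc
    2 * α * x + β ≤ √(2 * α) * (1 + α * x ^ 2) + β := by
      have hα_eq : α = √(2 * α) ^ 2 / 2 := by linarith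
      have : 0 ≤ √(2 * α) * (1 + (√(2 * α) * x - 1) ^ 2) := by positivity
      linear_combination this / 2 + (2 * x - √(2 * α) * x ^ 2) * hα_eq
    _ ≤ (√(2 * α) + β) * (α * x ^ 2 + β * x + 1) := by
      have : 0 ≤ √(2 * α) * (β * x) + β * (α * x ^ 2 + β * x) := by positivity
      linarith
    _ ≤ _ := by gcongr; exact add_one_le_exp _
  simp only [deriv_quadExp, quadExp, exp_neg, ← div_eq_mul_inv]
  exact ⟨neg_le_neg ((div_le_iff₀ (exp_pos _)).2 hlin), neg_nonpos.2 (by positivity)⟩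

lemma antitoneOn_quadExp (hα : 0 ≤ α) (hβ : 0 ≤ β) : AntitoneOn (quadExp α β) (Ici 0) := by
  intro x (hx : 0 ≤ x) y _ hxy
  unfold quadExp
  gcongr

lemma tendsto_quadExp_atTop (hα : 0 < α) (hβ : 0 ≤ β) :
    Tendsto (quadExp α β) atTop (𝓝 0) := by
  refine tendsto_exp_neg_atTop_nhds_zero.comp <| tendsto_atTop_mono' atTop ?_
    ((tendsto_pow_atTop two_ne_zero).const_mul_atTop hα)
  filter_upwards [eventually_ge_atTop 0] with x hx
  exact le_add_of_nonneg_right (mul_nonneg hβ hx)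

lemma continuous_deriv_quadExp (α β : ℝ) : Continuous (deriv (quadExp α β)) :=
  continuous_iff_continuousAt.2 fun x ↦ (hasDerivAt_deriv_quadExp α β x).continuousAt

lemma antitoneOn_deriv_quadExp (hα : 0 ≤ α) (hβ : 0 ≤ β) {c : ℝ}
    (hc : 2 * α * c + β ≤ √(2 * α)) : AntitoneOn (deriv (quadExp α β)) (Icc 0 c) := by
  refine antitoneOn_of_hasDerivWithinAt_nonpos (convex_Icc 0 c)
    (continuous_deriv_quadExp α β).continuousOn
    (fun x _ ↦ (hasDerivAt_deriv_quadExp α β x).hasDerivWithinAt) fun x hx ↦ ?_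
  obtain ⟨hx0, hxc⟩ := interior_subset hx
  have hslope : (2 * α * x + β) ^ 2 ≤ √(2 * α) ^ 2 := by
    gcongr
    exact hc.trans' (by gcongr)
  rw [sq_sqrt (by positivity)] at hslope
  exact mul_nonpos_of_nonpos_of_nonneg (sub_nonpos.2 hslope) (exp_pos _).le

lemma monotoneOn_deriv_quadExp (hα : 0 ≤ α) {c : ℝ} (hc : √(2 * α) ≤ 2 * α * c + β) :
    MonotoneOn (deriv (quadExp α β)) (Ici c) := by
  refine monotoneOn_of_hasDerivWithinAt_nonneg (convex_Ici c)
    (continuous_deriv_quadExp α β).continuousOn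
    (fun x _ ↦ (hasDerivAt_deriv_quadExp α β x).hasDerivWithinAt) fun x hx ↦ ?_
  have hcx : c ≤ x := interior_subset hx
  have hslope : √(2 * α) ^ 2 ≤ (2 * α * x + β) ^ 2 := by
    gcongr
    exact hc.trans (by gcongr)
  rw [sq_sqrt (by positivity)] at hslope
  exact mul_nonneg (sub_nonneg.2 hslope) (exp_pos _).le

lemma eVariationOn_deriv_quadExp_le (hα : 0 < α) (hβ : 0 ≤ β) :
    eVariationOn (deriv (quadExp α β)) (Ici 0) ≤ 2 * ENNReal.ofReal (√(2 * α) + β) := by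
  obtain ⟨c, hc, hanti, hmono⟩ : ∃ c ≥ 0, AntitoneOn (deriv (quadExp α β)) (Icc 0 c) ∧
      MonotoneOn (deriv (quadExp α β)) (Ici c) := by
    rcases le_total β √(2 * α) with h | h
    · have hinfl : 2 * α * ((√(2 * α) - β) / (2 * α)) + β = √(2 * α) := by field_simp; ring
      exact ⟨(√(2 * α) - β) / (2 * α), div_nonneg (sub_nonneg.2 h) (by positivity),
        antitoneOn_deriv_quadExp hα.le hβ hinfl.le, monotoneOn_deriv_quadExp hα.le hinfl.ge⟩
    · refine ⟨0, le_rfl, ?_, monotoneOn_deriv_quadExp hα.le (by simpa using h)⟩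
      exact (subsingleton_Icc_of_ge le_rfl).antitoneOn _
  simpa only [zero_sub, neg_neg] using eVariationOn_Ici_le_of_antitoneOn_of_monotoneOn
    hc hanti hmono fun x hx ↦ deriv_quadExp_mem_Icc hα.le hβ hx

lemma abs_tsum_quadExp_sub_shift_sub_le (hα : 0 < α) (hβ : 0 ≤ β) {θ : ℝ}
    (hθ : θ ∈ Ioo (0 : ℝ) 1) :
    |∑' n : ℕ, (quadExp α β n - quadExp α β (n + θ)) - θ| ≤
      2 * (θ * (1 - θ)) * (√(2 * α) + β) := by
  have hvar := eVariationOn_deriv_quadExp_le hα hβ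
  have htop : 2 * ENNReal.ofReal (√(2 * α) + β) ≠ ⊤ :=
    ENNReal.mul_ne_top ENNReal.ofNat_ne_top ENNReal.ofReal_ne_top
  have hvar' : (eVariationOn (deriv (quadExp α β)) (Ici 0)).toReal ≤ 2 * (√(2 * α) + β) := by
    refine (ENNReal.toReal_mono htop hvar).trans_eq ?_
    rw [ENNReal.toReal_mul, ENNReal.toReal_ofNat, ENNReal.toReal_ofReal (by positivity)]
  have hmain := abs_tsum_sub_shift_sub_le hθ
    (fun x _ ↦ (hasDerivAt_quadExp α β x).differentiableAt.hasDerivAt.hasDerivWithinAt)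
    (ne_top_of_le_ne_top htop hvar) (antitoneOn_quadExp hα.le hβ) (tendsto_quadExp_atTop hα hβ)
  have hzero : quadExp α β 0 = 1 := by simp [quadExp]
  rw [hzero, sub_zero, mul_one] at hmain
  have hθ' : 0 ≤ θ * (1 - θ) := mul_nonneg hθ.1.le (sub_nonneg.2 hθ.2.le)
  linarith [mul_le_mul_of_nonneg_left hvar' hθ']

end quadExp

lemma exp_neg_mul_Q1 (a : ℝ) (n ℓ : ℕ) :
    exp (-(a * Q1 n ℓ)) = quadExp (6 * a) (a * (2 + 3 * ℓ)) n := by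
  rw [quadExp, Q1]
  push_cast
  ring_nf

lemma exp_neg_mul_Q2 (a : ℝ) (n ℓ : ℕ) :
    exp (-(a * Q2 n ℓ)) = quadExp (6 * a) (a * (2 + 3 * ℓ)) (n + 2 / 3) := by
  rw [quadExp, Q2, Q1]
  push_cast
  ring_nf

lemma abs_tsum_exp_Q1_sub_exp_Q2_sub_le {a : ℝ} (ha : 0 < a) (ℓ : ℕ) :
    |∑' n : ℕ, (exp (-(a * Q1 n ℓ)) - exp (-(a * Q2 n ℓ))) - 2 / 3| ≤
      4 / 9 * (√(12 * a) + a * (2 + 3 * ℓ)) := by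
  simp only [exp_neg_mul_Q1, exp_neg_mul_Q2]
  convert abs_tsum_quadExp_sub_shift_sub_le (α := 6 * a) (β := a * (2 + 3 * ℓ)) (θ := 2 / 3)
    (by positivity) (by positivity) (by norm_num) using 1
  ring_nf

lemma scale_le_two_mul_rpow (N : ℕ) :
    2 * π / √6 / (2 * √N) ≤ 2 * ((N : ℝ) ^ (-(1 / 4) : ℝ)) ^ 2 := by
  have hsix : 2 ≤ √6 := le_sqrt_of_sq_le (by norm_num)
  have hpow : ((N : ℝ) ^ (-(1 / 4) : ℝ)) ^ 2 = (√N)⁻¹ := by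
    rw [← rpow_mul_natCast N.cast_nonneg, sqrt_eq_rpow, ← rpow_neg N.cast_nonneg]
    norm_num
  have hconst : 2 * π / √6 ≤ 4 := by
    rw [div_le_iff₀ (by positivity)]
    linarith [pi_le_four]
  calc 2 * π / √6 / (2 * √N) ≤ 4 / (2 * √N) := by gcongr
    _ = _ := by rw [hpow]; ring

theorem stmt_11_general {N : ℕ} (hN : 1 ≤ N) (ℓ : ℕ) :
    |(∑' n : ℕ,
        (Real.exp (-(2 * π / Real.sqrt 6) * (Q1 n ℓ : ℝ) / (2 * Real.sqrt N)) -
          Real.exp (-(2 * π / Real.sqrt 6) * (Q2 n ℓ : ℝ) / (2 * Real.sqrt N)))) -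
        2 / 3| ≤
      4 * ((N : ℝ) ^ (-(1 / 4) : ℝ) + ℓ * (N : ℝ) ^ (-(1 / 2) : ℝ)) := by
  have hN' : (1 : ℝ) ≤ N := Nat.one_le_cast.2 hN
  have hscale := scale_le_two_mul_rpow N
  have hsq : (N : ℝ) ^ (-(1 / 2) : ℝ) = ((N : ℝ) ^ (-(1 / 4) : ℝ)) ^ 2 := by
    rw [← rpow_mul_natCast N.cast_nonneg]
    norm_num
  have hu1 : (N : ℝ) ^ (-(1 / 4) : ℝ) ≤ 1 := rpow_le_one_of_one_le_of_nonpos hN' (by norm_num)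
  have hu0 : 0 ≤ (N : ℝ) ^ (-(1 / 4) : ℝ) := by positivity
  have ha : 0 < 2 * π / √6 / (2 * √N) := by positivity
  have hexp (x : ℝ) : -(2 * π / √6) * x / (2 * √N) = -(2 * π / √6 / (2 * √N) * x) := by ring
  simp only [hexp]
  rw [hsq]
  set a := 2 * π / √6 / (2 * √N)
  set u := (N : ℝ) ^ (-(1 / 4) : ℝ)
  have hsqrt : √(12 * a) ≤ 5 * u := sqrt_le_iff.2 ⟨by positivity, by nlinarith⟩
  calc _ ≤ 4 / 9 * (√(12 * a) + a * (2 + 3 * ℓ)) := abs_tsum_exp_Q1_sub_exp_Q2_sub_le ha ℓ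
    _ ≤ 4 / 9 * (5 * u + 2 * u ^ 2 * (2 + 3 * ℓ)) := by gcongr
    _ ≤ 4 * (u + ℓ * u ^ 2) := by
      have : 0 ≤ (ℓ : ℝ) * u ^ 2 := by positivity
      nlinarith

lemma rpow_add_mul_rpow_le {x y : ℝ} (hx : 1 ≤ x) (hy : y ≤ x ^ (3 / 8 : ℝ)) :
    x ^ (-(1 / 4) : ℝ) + y * x ^ (-(1 / 2) : ℝ) ≤ 2 * x ^ (-(1 / 10) : ℝ) := by
  have hx0 : 0 < x := by positivity
  calc x ^ (-(1 / 4) : ℝ) + y * x ^ (-(1 / 2) : ℝ)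
      ≤ x ^ (-(1 / 4) : ℝ) + x ^ (3 / 8 : ℝ) * x ^ (-(1 / 2) : ℝ) := by gcongr
    _ = x ^ (-(1 / 4) : ℝ) + x ^ (-(1 / 8) : ℝ) := by rw [← rpow_add hx0]; norm_num
    _ ≤ x ^ (-(1 / 10) : ℝ) + x ^ (-(1 / 10) : ℝ) := by gcongr <;> norm_num
    _ = _ := by ring

theorem stmt_11 :
    ∃ C > (0 : ℝ), ∃ N₀ : ℕ, ∀ N : ℕ, N₀ ≤ N → ∀ ℓ : ℕ,
      (ℓ : ℝ) ≤ (N : ℝ) ^ ((3 : ℝ) / 8) →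
      |(∑' n : ℕ,
          (Real.exp (-(2 * π / Real.sqrt 6) * (Q1 n ℓ : ℝ) / (2 * Real.sqrt N)) -
            Real.exp (-(2 * π / Real.sqrt 6) * (Q2 n ℓ : ℝ) / (2 * Real.sqrt N)))) -
          2 / 3| ≤
        C * (N : ℝ) ^ (-(1 / 10) : ℝ) :=
  ⟨8, by norm_num, 1, fun _ hN ℓ hℓ ↦ (stmt_11_general hN ℓ).trans <| by
    linarith [rpow_add_mul_rpow_le (Nat.one_le_cast.2 hN) hℓ]⟩
end

section
/- Let B = 2π/√6, F(α) = (1 + e^{−α})/(1 + e^{−α} + e^{−2α}), and for integers n ≥ 0 and ℓ ≥ 0 let Q₁(n, ℓ) = 2n(3n + 1) + 3nℓ and Q₂(n, ℓ) = Q₁(n, ℓ) + 8n + 4 + 2ℓ. There exist constants C > 0 and N₀ such that for all integers N ≥ N₀ and all integers ℓ with N^{3/8} ≤ ℓ ≤ √N·(log N)², the sum I_M = Σ_{n≥0} (e^{−B·Q₁(n,ℓ)/(2√N)} − e^{−B·Q₂(n,ℓ)/(2√N)}) satisfies |I_M − F(Bℓ/(2√N))| ≤ C·N^{−1/10}·F(Bℓ/(2√N));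 that is, I_M = (1 + O(N^{−1/10}))·F(Bℓ/(2√N)) uniformly in this range. -/
open Real

/-- The limit shape function `F(α) = (1 + e^{-α})/(1 + e^{-α} + e^{-2α})`. -/
noncomputable def Frk (α : ℝ) : ℝ :=
  (1 + Real.exp (-α)) / (1 + Real.exp (-α) + Real.exp (-2 * α))

/-!
For `b > 0` put `y = exp (-3bℓ)` and `c = exp (-2bℓ)`. The `n`-th term of the series is
`y ^ n * g n * (1 - c * h n)`, where `g n = exp (-b(6n² + 2n))` and `h n = exp (-b(8n + 4))` are
close to `1` as long as `n` is small compared with `b ^ (-1/2)`. Replacing them by `1` leaves a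
geometric series with sum `(1 - c) / (1 - y) = F(bℓ)`. Since `1 - exp (-u) ≤ u`, the replacement
costs at most a quadratic polynomial in `n` times `b * y ^ n`. The factor `1 - c ≤ 1 - y` in front
of its quadratic part makes up for the extra `(1 - y)⁻¹` in `∑ n ^ 2 * y ^ n`, so the total error is
`O(b / (1 - y) ^ 2)`, that is, `O(b + 1 / (b * ℓ ^ 2))`.
-/

theorem abs_tsum_sub_div_one_sub_le {f : ℕ → ℝ} {a p q y : ℝ} (hy0 : 0 ≤ y) (hy1 : y < 1)
    (hf : ∀ n, |f n - a * y ^ n| ≤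
      p * ((n + 1).choose 1 * y ^ n) + q * ((n + 2).choose 2 * y ^ n)) :
    |∑' n, f n - a / (1 - y)| ≤ p / (1 - y) ^ 2 + q / (1 - y) ^ 3 := by
  have hy : ‖y‖ < 1 := by rwa [Real.norm_of_nonneg hy0]
  have hgeom : HasSum (fun n ↦ a * y ^ n) (a / (1 - y)) :=
    (hasSum_geometric_of_lt_one hy0 hy1).mul_left a
  have hbound := ((hasSum_choose_mul_geometric_of_norm_lt_one 1 hy).mul_left p).add
    ((hasSum_choose_mul_geometric_of_norm_lt_one 2 hy).mul_left q)
  have hdiff : Summable fun n ↦ f n - a * y ^ n := .of_norm_bounded hbound.summable hf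
  have hsum : Summable f := by simpa using hdiff.add hgeom.summable
  have herror : ‖∑' n, (f n - a * y ^ n)‖ ≤ _ := tsum_of_norm_bounded hbound hf
  rw [hsum.tsum_sub hgeom.summable, hgeom.tsum_eq, Real.norm_eq_abs] at herror
  simpa [div_eq_mul_inv] using herror

theorem abs_mul_one_sub_mul_sub_one_sub_le {c g h : ℝ} (hc0 : 0 ≤ c) (hc1 : c ≤ 1)
    (hg0 : 0 ≤ g) (hg1 : g ≤ 1) (hh1 : h ≤ 1) :
    |g * (1 - c * h) - (1 - c)| ≤ (1 - h) + (1 - c) * (1 - g) := by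
  have hcg : c * g * (1 - h) ≤ 1 - h :=
    mul_le_of_le_one_left (sub_nonneg.2 hh1) (mul_le_one₀ hc1 hg0 hg1)
  have hcg0 : 0 ≤ c * g * (1 - h) := mul_nonneg (mul_nonneg hc0 hg0) (sub_nonneg.2 hh1)
  have hcg' : 0 ≤ (1 - c) * (1 - g) := mul_nonneg (sub_nonneg.2 hc1) (sub_nonneg.2 hg1)
  have hsplit : g * (1 - c * h) - (1 - c) = c * g * (1 - h) - (1 - c) * (1 - g) := by ring
  rw [hsplit, abs_le]
  constructor <;> linarith

theorem inv_sq_one_sub_exp_neg_le {u : ℝ} (hu : 0 < u) :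
    ((1 - exp (-u)) ^ 2)⁻¹ ≤ 2 * (1 + (u ^ 2)⁻¹) := by
  have hexp : exp (-u) ≤ (1 + u)⁻¹ := by
    rw [exp_neg]
    gcongr
    linarith [add_one_le_exp u]
  have hlower : (1 + u⁻¹)⁻¹ ≤ 1 - exp (-u) := by
    calc (1 + u⁻¹)⁻¹ = 1 - (1 + u)⁻¹ := by field_simp; ring
      _ ≤ 1 - exp (-u) := by gcongr
  calc ((1 - exp (-u)) ^ 2)⁻¹ ≤ (((1 + u⁻¹)⁻¹) ^ 2)⁻¹ := by gcongr
    _ = (1 + u⁻¹) ^ 2 := by rw [inv_pow, inv_inv]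
    _ ≤ 2 * (1 ^ 2 + u⁻¹ ^ 2) := add_sq_le
    _ = 2 * (1 + (u ^ 2)⁻¹) := by rw [one_pow, inv_pow]

theorem sqrt_div_sq_add_one_div_sqrt_le {x y s : ℝ} (hx : 1 ≤ x) (hs : s ≤ 1 / 2)
    (hy : x ^ s ≤ y) : √x / y ^ 2 + 1 / √x ≤ 2 * x ^ (1 / 2 - 2 * s) := by
  have hx0 : 0 < x := one_pos.trans_le hx
  have hleft : √x / y ^ 2 ≤ x ^ (1 / 2 - 2 * s) := by
    calc √x / y ^ 2 ≤ √x / (x ^ s) ^ 2 := by gcongr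
      _ = x ^ (1 / 2 - 2 * s) := by
        rw [sqrt_eq_rpow, ← rpow_mul_natCast hx0.le, ← rpow_sub hx0, mul_comm s, Nat.cast_ofNat]
  have hright : 1 / √x ≤ x ^ (1 / 2 - 2 * s) := by
    rw [one_div, sqrt_eq_rpow, ← rpow_neg hx0.le]
    exact rpow_le_rpow_of_exponent_le hx (by linarith)
  linarith

theorem Frk_eq_one_sub_exp_div_one_sub_exp {α : ℝ} (hα : α ≠ 0) :
    Frk α = (1 - exp (-(2 * α))) / (1 - exp (-(3 * α))) := by
  have htwo : exp (-(2 * α)) = exp (-α) ^ 2 := by rw [← exp_nat_mul]; congr 1; push_cast; ring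
  have hthree : exp (-(3 * α)) = exp (-α) ^ 3 := by rw [← exp_nat_mul]; congr 1; push_cast; ring
  have hden : 1 - exp (-α) ^ 3 ≠ 0 := by
    rw [← hthree, sub_ne_zero, ne_comm, Ne, exp_eq_one_iff]
    simpa using hα
  rw [Frk, neg_mul, htwo, hthree, div_eq_div_iff (by positivity) hden]
  ring

theorem two_thirds_le_Frk {α : ℝ} (hα : 0 ≤ α) : 2 / 3 ≤ Frk α := by
  have hle : exp (-α) ≤ 1 := exp_le_one_iff.2 (neg_nonpos.2 hα)
  have hsq : exp (-2 * α) = exp (-α) ^ 2 := by rw [← exp_nat_mul]; congr 1; push_cast; ring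
  rw [Frk, hsq, div_le_div_iff₀ (by norm_num) (by positivity)]
  nlinarith [exp_pos (-α)]

theorem exp_neg_mul_Q1_sub_exp_neg_mul_Q2 (b : ℝ) (n ℓ : ℕ) :
    exp (-(b * Q1 n ℓ)) - exp (-(b * Q2 n ℓ)) =
      exp (-(3 * (b * ℓ))) ^ n * (exp (-(b * (6 * n ^ 2 + 2 * n))) *
        (1 - exp (-(2 * (b * ℓ))) * exp (-(b * (8 * n + 4))))) := by
  simp only [mul_sub, mul_one, ← exp_nat_mul, ← exp_add, Q1, Q2]
  push_cast
  congr 2 <;> ring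

section Series

variable {b : ℝ} {ℓ : ℕ}

theorem abs_exp_neg_mul_Q1_sub_exp_neg_mul_Q2_sub_le (hb : 0 ≤ b) (n : ℕ) :
    |exp (-(b * Q1 n ℓ)) - exp (-(b * Q2 n ℓ)) -
        (1 - exp (-(2 * (b * ℓ)))) * exp (-(3 * (b * ℓ))) ^ n| ≤
      8 * b * ((n + 1).choose 1 * exp (-(3 * (b * ℓ))) ^ n) +
        12 * b * (1 - exp (-(3 * (b * ℓ)))) *
          ((n + 2).choose 2 * exp (-(3 * (b * ℓ))) ^ n) := by
  have hy0 := exp_pos (-(3 * (b * ℓ)))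
  have hyc : exp (-(3 * (b * ℓ))) ≤ exp (-(2 * (b * ℓ))) := by gcongr; norm_num
  have hc1 : exp (-(2 * (b * ℓ))) ≤ 1 := exp_le_one_iff.2 (neg_nonpos.2 (by positivity))
  have hg1 : exp (-(b * (6 * n ^ 2 + 2 * n))) ≤ 1 :=
    exp_le_one_iff.2 (neg_nonpos.2 (by positivity))
  have hh1 : exp (-(b * (8 * n + 4))) ≤ 1 := exp_le_one_iff.2 (neg_nonpos.2 (by positivity))
  have hg := one_sub_le_exp_neg (b * (6 * n ^ 2 + 2 * n))
  have hh := one_sub_le_exp_neg (b * (8 * n + 4))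
  have hfactor := abs_mul_one_sub_mul_sub_one_sub_le (exp_pos _).le hc1 (exp_pos _).le hg1 hh1
  rw [exp_neg_mul_Q1_sub_exp_neg_mul_Q2, mul_comm (1 - _) (_ ^ n), ← mul_sub, abs_mul,
    abs_of_pos (pow_pos hy0 n)]
  set y := exp (-(3 * (b * ℓ)))
  set c := exp (-(2 * (b * ℓ)))
  set g := exp (-(b * (6 * n ^ 2 + 2 * n)))
  set h := exp (-(b * (8 * n + 4)))
  have hlinear : 1 - h ≤ 8 * b * (n + 1) := by linarith
  have hquadratic : 1 - g ≤ 6 * b * ((n + 2) * (n + 1)) := by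
    nlinarith [mul_nonneg hb n.cast_nonneg]
  calc y ^ n * |g * (1 - c * h) - (1 - c)|
      ≤ y ^ n * (1 - h + (1 - c) * (1 - g)) := by gcongr
    _ ≤ y ^ n * (8 * b * (n + 1) + (1 - y) * (6 * b * ((n + 2) * (n + 1)))) := by
        have : 0 ≤ 1 - g := sub_nonneg.2 hg1
        have : 0 ≤ 1 - y := sub_nonneg.2 (hyc.trans hc1)
        gcongr
    _ = _ := by
        rw [Nat.choose_one_right, Nat.cast_choose_two]
        push_cast
        ring

theorem abs_tsum_exp_Q1_sub_exp_Q2_sub_Frk_le (hb : 0 < b) (hℓ : 0 < ℓ) :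
    |∑' n, (exp (-(b * Q1 n ℓ)) - exp (-(b * Q2 n ℓ))) - Frk (b * ℓ)| ≤
      20 * b / (1 - exp (-(3 * (b * ℓ)))) ^ 2 := by
  have hα : 0 < b * ℓ := by positivity
  have hy1 : exp (-(3 * (b * ℓ))) < 1 := exp_lt_one_iff.2 (neg_neg_of_pos (by positivity))
  have hy : 1 - exp (-(3 * (b * ℓ))) ≠ 0 := (sub_pos.2 hy1).ne'
  rw [Frk_eq_one_sub_exp_div_one_sub_exp hα.ne']
  refine (abs_tsum_sub_div_one_sub_le (exp_pos _).le hy1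
    (abs_exp_neg_mul_Q1_sub_exp_neg_mul_Q2_sub_le hb.le)).trans_eq ?_
  field_simp [hy]
  norm_num

theorem abs_tsum_exp_Q1_sub_exp_Q2_sub_Frk_le_mul_Frk (hb : 0 < b) (hℓ : 0 < ℓ) :
    |∑' n, (exp (-(b * Q1 n ℓ)) - exp (-(b * Q2 n ℓ))) - Frk (b * ℓ)| ≤
      60 * (b + 1 / (b * ℓ ^ 2)) * Frk (b * ℓ) := by
  have hα : 0 < b * ℓ := by positivity
  have hsq : (b * ℓ) ^ 2 ≤ (3 * (b * ℓ)) ^ 2 :=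
    pow_le_pow_left₀ hα.le (le_mul_of_one_le_left hα.le (by norm_num)) 2
  calc _ ≤ 20 * b / (1 - exp (-(3 * (b * ℓ)))) ^ 2 := abs_tsum_exp_Q1_sub_exp_Q2_sub_Frk_le hb hℓ
    _ = 20 * b * ((1 - exp (-(3 * (b * ℓ)))) ^ 2)⁻¹ := div_eq_mul_inv _ _
    _ ≤ 20 * b * (2 * (1 + ((3 * (b * ℓ)) ^ 2)⁻¹)) := by
        gcongr
        exact inv_sq_one_sub_exp_neg_le (by positivity)
    _ ≤ 20 * b * (2 * (1 + ((b * ℓ) ^ 2)⁻¹)) := by gcongr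
    _ = 60 * (b + 1 / (b * ℓ ^ 2)) * (2 / 3) := by field_simp; ring
    _ ≤ 60 * (b + 1 / (b * ℓ ^ 2)) * Frk (b * ℓ) := by gcongr; exact two_thirds_le_Frk hα.le

end Series

theorem stmt_12_general {B : ℝ} (hB : 0 < B) :
    ∃ C > (0 : ℝ), ∀ N : ℕ, 0 < N → ∀ ℓ : ℕ, 0 < ℓ →
      |(∑' n : ℕ, (exp (-B * (Q1 n ℓ : ℝ) / (2 * √N)) - exp (-B * (Q2 n ℓ : ℝ) / (2 * √N)))) -
          Frk (B * ℓ / (2 * √N))| ≤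
        C * (√N / ℓ ^ 2 + 1 / √N) * Frk (B * ℓ / (2 * √N)) := by
  refine ⟨60 * (B / 2 + 2 / B), by positivity, fun N hN ℓ hℓ ↦ ?_⟩
  have hscale (t : ℝ) : B * t / (2 * √N) = B / (2 * √N) * t := by ring
  have hFrk := two_thirds_le_Frk (α := B / (2 * √N) * ℓ) (by positivity)
  simp only [neg_mul, neg_div, hscale]
  refine (abs_tsum_exp_Q1_sub_exp_Q2_sub_Frk_le_mul_Frk (by positivity) hℓ).trans ?_
  rw [mul_assoc 60 (B / 2 + 2 / B)]
  gcongr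
  calc B / (2 * √N) + 1 / (B / (2 * √N) * ℓ ^ 2)
      = B / 2 * (1 / √N) + 2 / B * (√N / ℓ ^ 2) := by field_simp
    _ ≤ (B / 2 + 2 / B) * (√N / ℓ ^ 2 + 1 / √N) := by
        have : 0 ≤ B / 2 * (√N / ℓ ^ 2) := by positivity
        have : 0 ≤ 2 / B * (1 / √N) := by positivity
        linarith

theorem stmt_12 :
    ∃ C > (0 : ℝ), ∃ N₀ : ℕ, ∀ N : ℕ, N₀ ≤ N → ∀ ℓ : ℕ,
      (N : ℝ) ^ ((3 : ℝ) / 8) ≤ (ℓ : ℝ) → (ℓ : ℝ) ≤ Real.sqrt N * (Real.log N) ^ 2 →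
      |(∑' n : ℕ,
          (Real.exp (-(2 * π / Real.sqrt 6) * (Q1 n ℓ : ℝ) / (2 * Real.sqrt N)) -
            Real.exp (-(2 * π / Real.sqrt 6) * (Q2 n ℓ : ℝ) / (2 * Real.sqrt N)))) -
          Frk (2 * π / Real.sqrt 6 * (ℓ : ℝ) / (2 * Real.sqrt N))| ≤
        C * (N : ℝ) ^ (-(1 / 10) : ℝ) *
          Frk (2 * π / Real.sqrt 6 * (ℓ : ℝ) / (2 * Real.sqrt N)) := by
  obtain ⟨C, hC, hbound⟩ := stmt_12_general (B := 2 * π / √6) (by positivity)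
  refine ⟨2 * C, by positivity, 1, fun N hN ℓ hℓ _ ↦ ?_⟩
  have hN1 : (1 : ℝ) ≤ N := mod_cast hN
  have hℓ0 : 0 < ℓ := Nat.cast_pos.1 ((rpow_pos_of_pos (one_pos.trans_le hN1) _).trans_le hℓ)
  have hFrk := two_thirds_le_Frk (α := 2 * π / √6 * ℓ / (2 * √N)) (by positivity)
  refine (hbound N hN ℓ hℓ0).trans (mul_le_mul_of_nonneg_right ?_ (by linarith))
  calc C * (√N / ℓ ^ 2 + 1 / √N) ≤ C * (2 * (N : ℝ) ^ (1 / 2 - 2 * (3 / 8) : ℝ)) := by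
        gcongr
        exact sqrt_div_sq_add_one_div_sqrt_le hN1 (by norm_num) hℓ
    _ ≤ C * (2 * (N : ℝ) ^ (-(1 / 10) : ℝ)) := by
        gcongr
        norm_num
    _ = 2 * C * (N : ℝ) ^ (-(1 / 10) : ℝ) := by ring
end
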